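/- Anti-bridge lemma, second part: assume d ≥ 2 and let s ≥ 0. If x ∈ V ∩ B_s(p) satisfies ‖y − q‖ ≤ ‖x − q‖ for all y ∈ V ∩ B_s(p), and x lies in the topological interior of V, then x = p + √s·(p − q)/‖p − q‖; in particular, x lies on the anti-bridge of (V, p, q). -/

import Mathlib

/-!
Let `x` be a local maximizer of the distance to `q` on a closed ball around `p`. It lies on the
sphere, because the distance to `q` has no local maximum in an open set. On the sphere, maximizing
the distance to `q` is the same as maximizing the linear functional `⟪p - q, ·⟫`. In dimension at
least two, every point of the ball can be pushed onto the sphere orthogonally to `p - q`, and by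
little if it is near the sphere; so `x` is a local maximizer of the functional on the whole ball as
well. A local maximum of a linear functional on a convex set is global, and the equality case of
Cauchy–Schwarz identifies `x`.
-/

open Filter Metric Topology
open scoped RealInnerProductSpace

theorem not_isLocalMax_dist {E : Type*} [NormedAddCommGroup E] [NormedSpace ℝ E] [Nontrivial E]
    (q x : E) : ¬ IsLocalMax (dist · q) x := by
  intro h
  have hx : x ∈ interior (closedBall q (dist x q)) := mem_interior_iff_mem_nhds.2 h
  rw [interior_closedBall', mem_ball] at hx
  exact lt_irrefl _ hx

theorem mem_sphere_of_isLocalMaxOn_dist {E : Type*} [NormedAddCommGroup E] [NormedSpace ℝ E]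
    [Nontrivial E] {p q x : E} {r : ℝ} (hx : x ∈ closedBall p r)
    (h : IsLocalMaxOn (dist · q) (closedBall p r) x) : x ∈ sphere p r := by
  by_contra hxs
  have hx_ball : x ∈ ball p r := lt_of_le_of_ne hx hxs
  exact not_isLocalMax_dist q x (h.isLocalMax (closedBall_mem_nhds_of_mem hx_ball))

section InnerProductSpace

variable {E : Type*} [NormedAddCommGroup E] [InnerProductSpace ℝ E] {p q u v x y : E} {r : ℝ}

theorem exists_norm_eq_one_inner_eq_zero (hE : 1 < Module.rank ℝ E) (u : E) :
    ∃ v : E, ‖v‖ = 1 ∧ ⟪u, v⟫ = 0 := by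
  have hspan : Submodule.span ℝ {u} ≠ ⊤ := by
    intro htop
    have hrank := rank_span_le (R := ℝ) ({u} : Set E)
    rw [htop, rank_top, Cardinal.mk_singleton] at hrank
    exact hrank.not_gt hE
  obtain ⟨v, hv, hv0⟩ := Submodule.exists_mem_ne_zero_of_ne_bot
    (mt Submodule.orthogonal_eq_bot_iff.1 hspan)
  refine ⟨‖v‖⁻¹ • v, norm_smul_inv_norm hv0, ?_⟩
  rw [real_inner_smul_right, Submodule.mem_orthogonal_singleton_iff_inner_right.1 hv, mul_zero]

theorem exists_norm_add_smul_eq (hv : ‖v‖ = 1) (hy : ‖y‖ ≤ r) :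
    ∃ t : ℝ, ‖y + t • v‖ = r ∧ |t| ≤ √(r ^ 2 - ‖y‖ ^ 2) := by
  wlog hyv : 0 ≤ ⟪y, v⟫ generalizing v
  · obtain ⟨t, ht, htr⟩ := this (v := -v) (by rwa [norm_neg])
      (by rw [inner_neg_right]; linarith)
    exact ⟨-t, by rwa [neg_smul, ← smul_neg], by rwa [abs_neg]⟩
  set T := √(r ^ 2 - ‖y‖ ^ 2)
  have hT : T ^ 2 = r ^ 2 - ‖y‖ ^ 2 :=
    Real.sq_sqrt (sub_nonneg.2 (pow_le_pow_left₀ (norm_nonneg y) hy 2))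
  have hend : r ≤ ‖y + T • v‖ := by
    refine le_of_sq_le_sq ?_ (norm_nonneg _)
    rw [norm_add_sq_real, norm_smul, hv, real_inner_smul_right, mul_one, Real.norm_eq_abs, sq_abs,
      hT]
    linarith [mul_nonneg (Real.sqrt_nonneg _ : 0 ≤ T) hyv]
  obtain ⟨t, ⟨ht0, htT⟩, ht⟩ := intermediate_value_Icc (Real.sqrt_nonneg _ : 0 ≤ T)
    (f := fun t : ℝ ↦ ‖y + t • v‖) (by fun_prop) ⟨by simpa using hy, hend⟩
  exact ⟨t, ht, by rwa [abs_of_nonneg ht0]⟩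

theorem exists_mem_sphere_inner_eq (hE : 1 < Module.rank ℝ E) (u : E) (hy : y ∈ closedBall p r) :
    ∃ z ∈ sphere p r, ⟪u, z⟫ = ⟪u, y⟫ ∧ dist z y ≤ √(r ^ 2 - dist y p ^ 2) := by
  obtain ⟨v, hv, huv⟩ := exists_norm_eq_one_inner_eq_zero hE u
  obtain ⟨t, ht, htr⟩ := exists_norm_add_smul_eq hv (mem_closedBall_iff_norm.1 hy)
  refine ⟨y + t • v, ?_, ?_, ?_⟩
  · rwa [mem_sphere_iff_norm, add_sub_right_comm]
  · rw [inner_add_right, real_inner_smul_right, huv, mul_zero, add_zero]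
  · rwa [dist_self_add_left, norm_smul, hv, mul_one, Real.norm_eq_abs, dist_eq_norm]

theorem isLocalMaxOn_inner_closedBall_of_sphere (hE : 1 < Module.rank ℝ E) (hx : x ∈ sphere p r)
    (h : IsLocalMaxOn (⟪u, ·⟫) (sphere p r) x) : IsLocalMaxOn (⟪u, ·⟫) (closedBall p r) x := by
  choose! push hpush_mem hpush_inner hpush_dist using
    fun y (hy : y ∈ closedBall p r) ↦ exists_mem_sphere_inner_eq hE u hy
  have hbound : Tendsto (fun y ↦ √(r ^ 2 - dist y p ^ 2)) (𝓝[closedBall p r] x) (𝓝 0) := by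
    have hcont : Continuous fun y ↦ √(r ^ 2 - dist y p ^ 2) := by fun_prop
    simpa [mem_sphere.1 hx] using (hcont.tendsto x).mono_left nhdsWithin_le_nhds
  have hdist : Tendsto (fun y ↦ dist y (push y)) (𝓝[closedBall p r] x) (𝓝 0) := by
    refine squeeze_zero' (.of_forall fun _ ↦ dist_nonneg) ?_ hbound
    filter_upwards [self_mem_nhdsWithin] with y hy
    simpa only [dist_comm] using hpush_dist y hy
  have hpush : Tendsto push (𝓝[closedBall p r] x) (𝓝[sphere p r] x) :=
    tendsto_nhdsWithin_iff.2 ⟨(tendsto_iff_of_dist hdist).1 (tendsto_id.mono_left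
      nhdsWithin_le_nhds), eventually_mem_nhdsWithin.mono hpush_mem⟩
  filter_upwards [hpush.eventually h, self_mem_nhdsWithin] with y hy hyp
  rwa [← hpush_inner y hyp]

theorem eq_add_smul_of_isMaxOn_inner (hu : u ≠ 0) (hx : x ∈ closedBall p r)
    (h : IsMaxOn (⟪u, ·⟫) (closedBall p r) x) : x = p + (r / ‖u‖) • u := by
  have hr : 0 ≤ r := dist_nonneg.trans hx
  have hu' : ‖u‖ ≠ 0 := norm_ne_zero_iff.2 hu
  have htop_mem : p + (r / ‖u‖) • u ∈ closedBall p r := by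
    rw [mem_closedBall, dist_self_add_left, norm_smul, Real.norm_of_nonneg (by positivity),
      div_mul_cancel₀ _ hu']
  have hle : r * ‖u‖ ≤ ⟪u, x - p⟫ := by
    have htop : ⟪u, p + (r / ‖u‖) • u⟫ ≤ ⟪u, x⟫ := h htop_mem
    rw [inner_add_right, real_inner_smul_right, real_inner_self_eq_norm_mul_norm, ← mul_assoc,
      div_mul_cancel₀ _ hu'] at htop
    rw [inner_sub_right]
    linarith
  have hnorm : ‖x - p‖ = r := by
    refine le_antisymm (mem_closedBall_iff_norm.1 hx) ?_
    refine le_of_mul_le_mul_right (hle.trans ?_) (norm_pos_iff.2 hu)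
    rw [mul_comm]
    exact real_inner_le_norm u (x - p)
  have hinner : ⟪u, x - p⟫ = ‖u‖ * ‖x - p‖ :=
    le_antisymm (real_inner_le_norm _ _) (by rwa [hnorm, mul_comm])
  have hcollinear : r • u = ‖u‖ • (x - p) := hnorm ▸ inner_eq_norm_mul_iff_real.1 hinner
  rw [div_eq_inv_mul, mul_smul, hcollinear, inv_smul_smul₀ hu', add_sub_cancel]

theorem dist_le_dist_iff_inner_le_inner_of_mem_sphere (hx : x ∈ sphere p r) (hy : y ∈ sphere p r) :
    dist y q ≤ dist x q ↔ ⟪p - q, y⟫ ≤ ⟪p - q, x⟫ := by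
  have hexpand {z : E} (hz : z ∈ sphere p r) :
      dist z q ^ 2 = r ^ 2 + 2 * (⟪p - q, z⟫ - ⟪p - q, p⟫) + ‖p - q‖ ^ 2 := by
    rw [dist_eq_norm, ← sub_add_sub_cancel z p q, norm_add_sq_real, mem_sphere_iff_norm.1 hz,
      real_inner_comm, inner_sub_right]
  rw [← sq_le_sq₀ dist_nonneg dist_nonneg, hexpand hx, hexpand hy]
  constructor <;> intro h <;> linarith

theorem eq_add_smul_of_isLocalMaxOn_dist (hE : 1 < Module.rank ℝ E) (hpq : p ≠ q)
    (hx : x ∈ closedBall p r) (h : IsLocalMaxOn (dist · q) (closedBall p r) x) :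
    x = p + (r / ‖p - q‖) • (p - q) := by
  have : Nontrivial E := ⟨p, q, hpq⟩
  have hxs : x ∈ sphere p r := mem_sphere_of_isLocalMaxOn_dist hx h
  have hsphere : IsLocalMaxOn (⟪p - q, ·⟫) (sphere p r) x := by
    filter_upwards [h.on_subset sphere_subset_closedBall, self_mem_nhdsWithin] with y hy hys
    exact (dist_le_dist_iff_inner_le_inner_of_mem_sphere hxs hys).1 hy
  have hball : IsMaxOn (⟪p - q, ·⟫) (closedBall p r) x :=
    .of_isLocalMaxOn_of_concaveOn hx (isLocalMaxOn_inner_closedBall_of_sphere hE hxs hsphere)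
      ((innerₛₗ ℝ (p - q)).concaveOn (convex_closedBall p r))
  exact eq_add_smul_of_isMaxOn_inner (sub_ne_zero.2 hpq) hx hball

theorem stmt_13_general (hE : 1 < Module.rank ℝ E) {V : Set E} (hpq : p ≠ q)
    (hx : x ∈ V ∩ closedBall p r) (hmax : ∀ y ∈ V ∩ closedBall p r, ‖y - q‖ ≤ ‖x - q‖)
    (hint : x ∈ interior V) :
    x = p + (r / ‖p - q‖) • (p - q) ∧ x ∈ V ∩ {z : E | ∃ t : ℝ, 0 ≤ t ∧ z = p + t • (p - q)} := by
  have hlocal : IsLocalMaxOn (dist · q) (closedBall p r) x := by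
    filter_upwards [mem_nhdsWithin_of_mem_nhds (mem_interior_iff_mem_nhds.1 hint),
      self_mem_nhdsWithin] with y hyV hy
    simpa only [dist_eq_norm] using hmax y ⟨hyV, hy⟩
  have heq := eq_add_smul_of_isLocalMaxOn_dist hE hpq hx.2 hlocal
  have hr : 0 ≤ r := dist_nonneg.trans hx.2
  exact ⟨heq, hx.1, r / ‖p - q‖, by positivity, heq⟩

end InnerProductSpace

/-- Anti-bridge lemma, second part. Assume d ≥ 2 and s ≥ 0. If
x ∈ V ∩ B_s(p) maximizes the distance to q over V ∩ B_s(p) and x lies in the topological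
interior of V, then x = p + √s·(p − q)/‖p − q‖; in particular x lies on the anti-bridge
of (V, p, q). -/
theorem stmt_13 {d : ℕ} (hd : 2 ≤ d) (V : Set (EuclideanSpace ℝ (Fin d)))
    (hVne : V.Nonempty) (hVcl : IsClosed V) (hVcx : Convex ℝ V)
    (p q : EuclideanSpace ℝ (Fin d)) (hpq : p ≠ q)
    (s : ℝ) (hs : 0 ≤ s)
    (x : EuclideanSpace ℝ (Fin d))
    (hx : x ∈ V ∩ Metric.closedBall p (Real.sqrt s))
    (hmax : ∀ y ∈ V ∩ Metric.closedBall p (Real.sqrt s), ‖y - q‖ ≤ ‖x - q‖)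
    (hint : x ∈ interior V) :
    x = p + (Real.sqrt s / ‖p - q‖) • (p - q) ∧
    x ∈ V ∩ {z : EuclideanSpace ℝ (Fin d) | ∃ t : ℝ, 0 ≤ t ∧ z = p + t • (p - q)} := by
  have hrank : 1 < Module.rank ℝ (EuclideanSpace ℝ (Fin d)) :=
    Module.lt_rank_of_lt_finrank (hd.trans_eq finrank_euclideanSpace_fin.symm)
  exact stmt_13_general hrank hpq hx hmax hint
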